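/- Let (H,α) be a monoidal Hom-Hopf algebra, (A,β) a right (H,α)-Hom-comodule algebra admitting a total integral φ:H→A, and B=A^{coH}. Then for every right (B,β|_B)-Hom-module (M,μ), the adjunction unit η_M: M → (M⊗_B A)^{coH}, η_M(m)=μ⁻¹(m)⊗1_A, is bijective, with inverse φ_M: (M⊗_B A)^{coH} → M given by φ_M(m⊗a)=m·t(a), where t(a)=a₍₀₎φ(S(a₍₁₎))∈B. -/

import Mathlib

open TensorProduct

noncomputable section

/-- A (unital) monoidal Hom-bialgebra, following Caenepeel–Goyvaerts.
The algebra axioms are stated pointwise, the coalgebra axioms at the level of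
linear maps (using the standard vector-space associator to compare the two
sides of Hom-coassociativity). -/
structure MonoidalHomBialgebra (k : Type) [Field k] (H : Type) [AddCommGroup H] [Module k H] where
  mul : H →ₗ[k] H →ₗ[k] H
  one : H
  comul : H →ₗ[k] H ⊗[k] H
  counit : H →ₗ[k] k
  aut : H ≃ₗ[k] H
  hom_assoc : ∀ a b c, mul (aut a) (mul b c) = mul (mul a b) (aut c)
  mulOne : ∀ a, mul a one = aut a
  oneMul : ∀ a, mul one a = aut a
  aut_mul : ∀ a b, aut (mul a b) = mul (aut a) (aut b)
  aut_one : aut one = one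
  coassoc :
    (TensorProduct.assoc k H H H).toLinearMap ∘ₗ
        (TensorProduct.map comul aut.symm.toLinearMap) ∘ₗ comul =
      (TensorProduct.map aut.symm.toLinearMap comul) ∘ₗ comul
  counit_left :
    (TensorProduct.lid k H).toLinearMap ∘ₗ (TensorProduct.map counit LinearMap.id) ∘ₗ comul =
      aut.symm.toLinearMap
  counit_right :
    (TensorProduct.rid k H).toLinearMap ∘ₗ (TensorProduct.map LinearMap.id counit) ∘ₗ comul =
      aut.symm.toLinearMap
  comul_aut :
    comul ∘ₗ aut.toLinearMap = (TensorProduct.map aut.toLinearMap aut.toLinearMap) ∘ₗ comul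
  counit_aut : counit ∘ₗ aut.toLinearMap = counit
  comul_mul :
    comul ∘ₗ TensorProduct.lift mul =
      (TensorProduct.map (TensorProduct.lift mul) (TensorProduct.lift mul)) ∘ₗ
        (TensorProduct.tensorTensorTensorComm k H H H H).toLinearMap ∘ₗ
          (TensorProduct.map comul comul)
  comul_one : comul one = one ⊗ₜ[k] one
  counit_mul : ∀ a b, counit (mul a b) = counit a * counit b
  counit_one : counit one = 1

/-- A monoidal Hom-Hopf algebra: a monoidal Hom-bialgebra with an antipode. -/
structure MonoidalHomHopf (k : Type) [Field k] (H : Type) [AddCommGroup H] [Module k H]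
    extends MonoidalHomBialgebra k H where
  antipode : H →ₗ[k] H
  antipode_aut : antipode ∘ₗ aut.toLinearMap = aut.toLinearMap ∘ₗ antipode
  antipode_mul_left :
    TensorProduct.lift mul ∘ₗ (TensorProduct.map antipode LinearMap.id) ∘ₗ comul =
      LinearMap.toSpanSingleton k H one ∘ₗ counit
  antipode_mul_right :
    TensorProduct.lift mul ∘ₗ (TensorProduct.map LinearMap.id antipode) ∘ₗ comul =
      LinearMap.toSpanSingleton k H one ∘ₗ counit

variable {k : Type} [Field k] {H : Type} [AddCommGroup H] [Module k H]

/-- A right (H,α)-Hom-comodule. -/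
structure HomComodule (Hb : MonoidalHomBialgebra k H) (M : Type) [AddCommGroup M] [Module k M] where
  coact : M →ₗ[k] M ⊗[k] H
  aut : M ≃ₗ[k] M
  coassoc :
    (TensorProduct.map aut.symm.toLinearMap Hb.comul) ∘ₗ coact =
      (TensorProduct.assoc k M H H).toLinearMap ∘ₗ
        (TensorProduct.map coact Hb.aut.symm.toLinearMap) ∘ₗ coact
  counit :
    (TensorProduct.rid k M).toLinearMap ∘ₗ (TensorProduct.map LinearMap.id Hb.counit) ∘ₗ coact =
      aut.symm.toLinearMap
  coact_aut :
    coact ∘ₗ aut.toLinearMap = (TensorProduct.map aut.toLinearMap Hb.aut.toLinearMap) ∘ₗ coact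

/-- A left (H,α)-Hom-comodule. -/
structure HomLeftComodule (Hb : MonoidalHomBialgebra k H) (M : Type) [AddCommGroup M] [Module k M] where
  coact : M →ₗ[k] H ⊗[k] M
  aut : M ≃ₗ[k] M
  coassoc :
    (TensorProduct.map Hb.comul aut.symm.toLinearMap) ∘ₗ coact =
      (TensorProduct.assoc k H H M).symm.toLinearMap ∘ₗ
        (TensorProduct.map Hb.aut.symm.toLinearMap coact) ∘ₗ coact
  counit :
    (TensorProduct.lid k M).toLinearMap ∘ₗ (TensorProduct.map Hb.counit LinearMap.id) ∘ₗ coact =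
      aut.symm.toLinearMap
  coact_aut :
    coact ∘ₗ aut.toLinearMap = (TensorProduct.map Hb.aut.toLinearMap aut.toLinearMap) ∘ₗ coact

/-- A right (H,α)-Hom-comodule algebra. -/
structure HomComoduleAlgebra (Hb : MonoidalHomBialgebra k H) (A : Type) [AddCommGroup A] [Module k A] where
  mul : A →ₗ[k] A →ₗ[k] A
  one : A
  aut : A ≃ₗ[k] A
  hom_assoc : ∀ a b c, mul (aut a) (mul b c) = mul (mul a b) (aut c)
  mulOne : ∀ a, mul a one = aut a
  oneMul : ∀ a, mul one a = aut a
  aut_mul : ∀ a b, aut (mul a b) = mul (aut a) (aut b)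
  aut_one : aut one = one
  coact : A →ₗ[k] A ⊗[k] H
  coassoc :
    (TensorProduct.map aut.symm.toLinearMap Hb.comul) ∘ₗ coact =
      (TensorProduct.assoc k A H H).toLinearMap ∘ₗ
        (TensorProduct.map coact Hb.aut.symm.toLinearMap) ∘ₗ coact
  counit :
    (TensorProduct.rid k A).toLinearMap ∘ₗ (TensorProduct.map LinearMap.id Hb.counit) ∘ₗ coact =
      aut.symm.toLinearMap
  coact_aut :
    coact ∘ₗ aut.toLinearMap = (TensorProduct.map aut.toLinearMap Hb.aut.toLinearMap) ∘ₗ coact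
  coact_mul :
    coact ∘ₗ TensorProduct.lift mul =
      (TensorProduct.map (TensorProduct.lift mul) (TensorProduct.lift Hb.mul)) ∘ₗ
        (TensorProduct.tensorTensorTensorComm k A H A H).toLinearMap ∘ₗ
          (TensorProduct.map coact coact)
  coact_one : coact one = one ⊗ₜ[k] Hb.one

variable {A : Type} [AddCommGroup A] [Module k A]

/-- A right (A,β)-Hom-module. -/
structure HomModule {Hb : MonoidalHomBialgebra k H} (Ac : HomComoduleAlgebra Hb A)
    (M : Type) [AddCommGroup M] [Module k M] where
  act : M →ₗ[k] A →ₗ[k] M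
  aut : M ≃ₗ[k] M
  act_act : ∀ m a b, act (act m a) (Ac.aut b) = act (aut m) (Ac.mul a b)
  act_one : ∀ m, act m Ac.one = aut m
  aut_act : ∀ m a, aut (act m a) = act (aut m) (Ac.aut a)

/-- A right Hom-module over the subalgebra of `A` carved out by `Bset`
(typically the coinvariants `B = A^{co H}`): the action is a bilinear map
`M × A → M` whose Hom-module axioms are only required on `Bset`. -/
structure HomModuleOn {Hb : MonoidalHomBialgebra k H} (Ac : HomComoduleAlgebra Hb A)
    (Bset : Set A) (M : Type) [AddCommGroup M] [Module k M] where
  act : M →ₗ[k] A →ₗ[k] M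
  aut : M ≃ₗ[k] M
  act_act : ∀ m, ∀ b ∈ Bset, ∀ b' ∈ Bset, act (act m b) (Ac.aut b') = act (aut m) (Ac.mul b b')
  act_one : ∀ m, act m Ac.one = aut m
  aut_act : ∀ m, ∀ b ∈ Bset, aut (act m b) = act (aut m) (Ac.aut b)

/-- A left Hom-module over the subalgebra of `A` carved out by `Bset`. -/
structure HomLeftModuleOn {Hb : MonoidalHomBialgebra k H} (Ac : HomComoduleAlgebra Hb A)
    (Bset : Set A) (M : Type) [AddCommGroup M] [Module k M] where
  act : A →ₗ[k] M →ₗ[k] M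
  aut : M ≃ₗ[k] M
  act_act : ∀ m, ∀ b ∈ Bset, ∀ b' ∈ Bset, act (Ac.aut b) (act b' m) = act (Ac.mul b b') (aut m)
  act_one : ∀ m, act Ac.one m = aut m
  aut_act : ∀ m, ∀ b ∈ Bset, aut (act b m) = act (Ac.aut b) (aut m)

/-- A right-right (H,A)-Hom-Hopf module (a relative Hom-Hopf module). -/
structure HomHopfModule {Hb : MonoidalHomBialgebra k H} (Ac : HomComoduleAlgebra Hb A)
    (N : Type) [AddCommGroup N] [Module k N] where
  act : N →ₗ[k] A →ₗ[k] N
  aut : N ≃ₗ[k] N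
  act_act : ∀ n a b, act (act n a) (Ac.aut b) = act (aut n) (Ac.mul a b)
  act_one : ∀ n, act n Ac.one = aut n
  aut_act : ∀ n a, aut (act n a) = act (aut n) (Ac.aut a)
  coact : N →ₗ[k] N ⊗[k] H
  coassoc :
    (TensorProduct.map aut.symm.toLinearMap Hb.comul) ∘ₗ coact =
      (TensorProduct.assoc k N H H).toLinearMap ∘ₗ
        (TensorProduct.map coact Hb.aut.symm.toLinearMap) ∘ₗ coact
  counit :
    (TensorProduct.rid k N).toLinearMap ∘ₗ (TensorProduct.map LinearMap.id Hb.counit) ∘ₗ coact =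
      aut.symm.toLinearMap
  coact_aut :
    coact ∘ₗ aut.toLinearMap = (TensorProduct.map aut.toLinearMap Hb.aut.toLinearMap) ∘ₗ coact
  compat :
    coact ∘ₗ TensorProduct.lift act =
      (TensorProduct.map (TensorProduct.lift act) (TensorProduct.lift Hb.mul)) ∘ₗ
        (TensorProduct.tensorTensorTensorComm k N H A H).toLinearMap ∘ₗ
          (TensorProduct.map coact Ac.coact)

/-- A left-right (H,A)-Hom-Hopf module. -/
structure LRHomHopfModule {Hb : MonoidalHomBialgebra k H} (Ac : HomComoduleAlgebra Hb A)
    (N : Type) [AddCommGroup N] [Module k N] where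
  act : A →ₗ[k] N →ₗ[k] N
  aut : N ≃ₗ[k] N
  act_act : ∀ n a b, act (Ac.aut a) (act b n) = act (Ac.mul a b) (aut n)
  act_one : ∀ n, act Ac.one n = aut n
  aut_act : ∀ n a, aut (act a n) = act (Ac.aut a) (aut n)
  coact : N →ₗ[k] N ⊗[k] H
  coassoc :
    (TensorProduct.map aut.symm.toLinearMap Hb.comul) ∘ₗ coact =
      (TensorProduct.assoc k N H H).toLinearMap ∘ₗ
        (TensorProduct.map coact Hb.aut.symm.toLinearMap) ∘ₗ coact
  counit :
    (TensorProduct.rid k N).toLinearMap ∘ₗ (TensorProduct.map LinearMap.id Hb.counit) ∘ₗ coact =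
      aut.symm.toLinearMap
  coact_aut :
    coact ∘ₗ aut.toLinearMap = (TensorProduct.map aut.toLinearMap Hb.aut.toLinearMap) ∘ₗ coact
  compat :
    coact ∘ₗ TensorProduct.lift act =
      (TensorProduct.map (TensorProduct.lift act) (TensorProduct.lift Hb.mul)) ∘ₗ
        (TensorProduct.tensorTensorTensorComm k A H N H).toLinearMap ∘ₗ
          (TensorProduct.map Ac.coact coact)

/-- Coinvariants (as a set) of a coaction `coact` with structure automorphism `autM`. -/
def coinvSetOf {M : Type} [AddCommGroup M] [Module k M] (oneH : H)
    (coact : M →ₗ[k] M ⊗[k] H) (autM : M ≃ₗ[k] M) : Set M :=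
  {m | coact m = autM.symm m ⊗ₜ[k] oneH}

/-- Coinvariants as a submodule. -/
def coinvSubmoduleOf {M : Type} [AddCommGroup M] [Module k M] (oneH : H)
    (coact : M →ₗ[k] M ⊗[k] H) (autM : M ≃ₗ[k] M) : Submodule k M :=
  LinearMap.ker (coact - ((TensorProduct.mk k M H).flip oneH) ∘ₗ autM.symm.toLinearMap)

/-- The coinvariants `B = A^{co H}` of a Hom-comodule algebra. -/
def coinvA {Hb : MonoidalHomBialgebra k H} (Ac : HomComoduleAlgebra Hb A) : Set A :=
  coinvSetOf Hb.one Ac.coact Ac.aut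

/-- The defining relations of the tensor product `M ⊗_B A` for a right `B`-Hom-module `M`. -/
def relSubR {M : Type} [AddCommGroup M] [Module k M]
    (mulA : A →ₗ[k] A →ₗ[k] A) (autA : A ≃ₗ[k] A) (Bset : Set A)
    (act : M →ₗ[k] A →ₗ[k] M) (autM : M ≃ₗ[k] M) : Submodule k (M ⊗[k] A) :=
  Submodule.span k
    {x | ∃ m a b, b ∈ Bset ∧ x = act m b ⊗ₜ[k] autA a - autM m ⊗ₜ[k] mulA b a}

/-- The defining relations of the tensor product `A ⊗_B M` for a left `B`-Hom-module `M`. -/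
def relSubL {M : Type} [AddCommGroup M] [Module k M]
    (mulA : A →ₗ[k] A →ₗ[k] A) (autA : A ≃ₗ[k] A) (Bset : Set A)
    (act : A →ₗ[k] M →ₗ[k] M) (autM : M ≃ₗ[k] M) : Submodule k (A ⊗[k] M) :=
  Submodule.span k
    {x | ∃ a m b, b ∈ Bset ∧ x = autA a ⊗ₜ[k] act b m - mulA a b ⊗ₜ[k] autM m}

/-- The cotensor product `X □_H V` of a right Hom-comodule and a left Hom-comodule,
as a submodule of `X ⊗ V`. -/
def cotensorSub {X V : Type} [AddCommGroup X] [Module k X] [AddCommGroup V] [Module k V]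
    (coactX : X →ₗ[k] X ⊗[k] H) (autX : X ≃ₗ[k] X)
    (coactV : V →ₗ[k] H ⊗[k] V) (autV : V ≃ₗ[k] V) : Submodule k (X ⊗[k] V) :=
  LinearMap.ker
    ((TensorProduct.map coactX autV.symm.toLinearMap) -
      ((TensorProduct.assoc k X H V).symm.toLinearMap ∘ₗ
        TensorProduct.map autX.symm.toLinearMap coactV))

/-- The canonical Galois map at the level of `A ⊗ A`:
`a ⊗ b ↦ β⁻¹(a)·b₍₀₎ ⊗ α(b₍₁₎)`. -/
def canPreLin {Hb : MonoidalHomBialgebra k H} (Ac : HomComoduleAlgebra Hb A) :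
    A ⊗[k] A →ₗ[k] A ⊗[k] H :=
  (TensorProduct.map (TensorProduct.lift Ac.mul) Hb.aut.toLinearMap) ∘ₗ
    (TensorProduct.assoc k A A H).symm.toLinearMap ∘ₗ
      (TensorProduct.map Ac.aut.symm.toLinearMap Ac.coact)

/-- The second canonical Galois map at the level of `A ⊗ A`:
`a ⊗ b ↦ a₍₀₎·β⁻¹(b) ⊗ α(a₍₁₎)`. -/
def canPreLin' {Hb : MonoidalHomBialgebra k H} (Ac : HomComoduleAlgebra Hb A) :
    A ⊗[k] A →ₗ[k] A ⊗[k] H :=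
  (TensorProduct.map (TensorProduct.lift Ac.mul) Hb.aut.toLinearMap) ∘ₗ
    (TensorProduct.assoc k A A H).symm.toLinearMap ∘ₗ
      (TensorProduct.map LinearMap.id (TensorProduct.comm k H A).toLinearMap) ∘ₗ
        (TensorProduct.assoc k A H A).toLinearMap ∘ₗ
          (TensorProduct.map Ac.coact Ac.aut.symm.toLinearMap)

/-- `φ : H → A` is a total integral. -/
def IsTotalIntegral {Hb : MonoidalHomBialgebra k H} (Ac : HomComoduleAlgebra Hb A)
    (φ : H →ₗ[k] A) : Prop :=
  φ ∘ₗ Hb.aut.toLinearMap = Ac.aut.toLinearMap ∘ₗ φ ∧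
    Ac.coact ∘ₗ φ = (TensorProduct.map φ LinearMap.id) ∘ₗ Hb.comul ∧
      φ Hb.one = Ac.one

/-- The Hom-comodule structure on `M ⊗ A` inducing that of `M ⊗_B A`:
`m ⊗ a ↦ (μ⁻¹(m) ⊗ a₍₀₎) ⊗ α(a₍₁₎)`. -/
def quotCoactPreR {Hb : MonoidalHomBialgebra k H} (Ac : HomComoduleAlgebra Hb A)
    {M : Type} [AddCommGroup M] [Module k M] (autM : M ≃ₗ[k] M) :
    (M ⊗[k] A) →ₗ[k] (M ⊗[k] A) ⊗[k] H :=
  (TensorProduct.assoc k M A H).symm.toLinearMap ∘ₗ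
    TensorProduct.map autM.symm.toLinearMap
      ((TensorProduct.map LinearMap.id Hb.aut.toLinearMap) ∘ₗ Ac.coact)

/-- The Hom-comodule structure on `A ⊗ M` inducing that of `A ⊗_B M`:
`a ⊗ m ↦ (a₍₀₎ ⊗ μ⁻¹(m)) ⊗ α(a₍₁₎)`. -/
def quotCoactPreL {Hb : MonoidalHomBialgebra k H} (Ac : HomComoduleAlgebra Hb A)
    {M : Type} [AddCommGroup M] [Module k M] (autM : M ≃ₗ[k] M) :
    (A ⊗[k] M) →ₗ[k] (A ⊗[k] M) ⊗[k] H :=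
  (TensorProduct.assoc k A M H).symm.toLinearMap ∘ₗ
    (TensorProduct.map LinearMap.id (TensorProduct.comm k H M).toLinearMap) ∘ₗ
      (TensorProduct.assoc k A H M).toLinearMap ∘ₗ
        TensorProduct.map
          ((TensorProduct.map LinearMap.id Hb.aut.toLinearMap) ∘ₗ Ac.coact)
          autM.symm.toLinearMap

/-- Bijectivity of the adjunction unit `η_M : M → (M ⊗_B A)^{co H}`, `m ↦ μ⁻¹(m) ⊗ 1_A`,
for a right `B`-Hom-module `M`.  Since the Hom-comodule structure of `M ⊗_B A` is the
one induced from `M ⊗ A`, it is quantified over all maps `ρbar` (resp. `θ`) induced by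
the comodule structure (resp. by `μ⁻¹ ⊗ β⁻¹`) on `M ⊗ A`. -/
def UnitBijectiveR {Hb : MonoidalHomBialgebra k H} (Ac : HomComoduleAlgebra Hb A)
    (Bset : Set A) {M : Type} [AddCommGroup M] [Module k M]
    (S : HomModuleOn Ac Bset M) : Prop :=
  ∀ (ρbar : ((M ⊗[k] A) ⧸ relSubR Ac.mul Ac.aut Bset S.act S.aut) →ₗ[k]
      ((M ⊗[k] A) ⧸ relSubR Ac.mul Ac.aut Bset S.act S.aut) ⊗[k] H)
    (θ : ((M ⊗[k] A) ⧸ relSubR Ac.mul Ac.aut Bset S.act S.aut) →ₗ[k]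
      ((M ⊗[k] A) ⧸ relSubR Ac.mul Ac.aut Bset S.act S.aut)),
    ρbar ∘ₗ (relSubR Ac.mul Ac.aut Bset S.act S.aut).mkQ =
      (TensorProduct.map (relSubR Ac.mul Ac.aut Bset S.act S.aut).mkQ LinearMap.id) ∘ₗ
        quotCoactPreR Ac S.aut →
    θ ∘ₗ (relSubR Ac.mul Ac.aut Bset S.act S.aut).mkQ =
      (relSubR Ac.mul Ac.aut Bset S.act S.aut).mkQ ∘ₗ
        TensorProduct.map S.aut.symm.toLinearMap Ac.aut.symm.toLinearMap →
    ((∀ m : M, ρbar ((relSubR Ac.mul Ac.aut Bset S.act S.aut).mkQ (S.aut.symm m ⊗ₜ[k] Ac.one)) =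
        θ ((relSubR Ac.mul Ac.aut Bset S.act S.aut).mkQ (S.aut.symm m ⊗ₜ[k] Ac.one)) ⊗ₜ[k] Hb.one) ∧
      Function.Injective
        (fun m : M => (relSubR Ac.mul Ac.aut Bset S.act S.aut).mkQ (S.aut.symm m ⊗ₜ[k] Ac.one)) ∧
      ∀ x, ρbar x = θ x ⊗ₜ[k] Hb.one →
        ∃ m : M, (relSubR Ac.mul Ac.aut Bset S.act S.aut).mkQ (S.aut.symm m ⊗ₜ[k] Ac.one) = x)

/-- The relations of `N^{co H} ⊗_B A` for a right (H,A)-Hom-Hopf module `N`;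
the closure of the coinvariants under the `B`-action and the automorphism is
encoded by existential membership. -/
def relCoinvR {Hb : MonoidalHomBialgebra k H} (Ac : HomComoduleAlgebra Hb A)
    (Bset : Set A) {N : Type} [AddCommGroup N] [Module k N]
    (P : HomHopfModule Ac N) :
    Submodule k ((coinvSubmoduleOf Hb.one P.coact P.aut : Submodule k N) ⊗[k] A) :=
  Submodule.span k
    {x | ∃ (n n' n'' : coinvSubmoduleOf Hb.one P.coact P.aut) (a b : A), b ∈ Bset ∧
      (n' : N) = P.act n b ∧ (n'' : N) = P.aut n ∧
      x = n' ⊗ₜ[k] Ac.aut a - n'' ⊗ₜ[k] Ac.mul b a}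

/-- The counit of the adjunction at the level of `N^{co H} ⊗ A`: `n ⊗ a ↦ n · a`. -/
def counitPre {Hb : MonoidalHomBialgebra k H} (Ac : HomComoduleAlgebra Hb A)
    {N : Type} [AddCommGroup N] [Module k N] (P : HomHopfModule Ac N) :
    ((coinvSubmoduleOf Hb.one P.coact P.aut : Submodule k N) ⊗[k] A) →ₗ[k] N :=
  TensorProduct.lift (P.act ∘ₗ (coinvSubmoduleOf Hb.one P.coact P.aut).subtype)

/-- Bijectivity of the adjunction counit `ε_N : N^{co H} ⊗_B A → N`, `n ⊗ a ↦ n·a`: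
equivalently, the lift `N^{co H} ⊗ A → N` is surjective and its kernel is exactly
the defining relations of `⊗_B`. -/
def CounitBijectiveR {Hb : MonoidalHomBialgebra k H} (Ac : HomComoduleAlgebra Hb A)
    (Bset : Set A) {N : Type} [AddCommGroup N] [Module k N]
    (P : HomHopfModule Ac N) : Prop :=
  Function.Surjective (counitPre Ac P) ∧ LinearMap.ker (counitPre Ac P) = relCoinvR Ac Bset P

/-- Bijectivity of the adjunction unit `η'_M : M → (A ⊗_B M)^{co H}`, `m ↦ 1_A ⊗ μ⁻¹(m)`,
for a left `B`-Hom-module `M`. -/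
def UnitBijectiveL {Hb : MonoidalHomBialgebra k H} (Ac : HomComoduleAlgebra Hb A)
    (Bset : Set A) {M : Type} [AddCommGroup M] [Module k M]
    (S : HomLeftModuleOn Ac Bset M) : Prop :=
  ∀ (ρbar : ((A ⊗[k] M) ⧸ relSubL Ac.mul Ac.aut Bset S.act S.aut) →ₗ[k]
      ((A ⊗[k] M) ⧸ relSubL Ac.mul Ac.aut Bset S.act S.aut) ⊗[k] H)
    (θ : ((A ⊗[k] M) ⧸ relSubL Ac.mul Ac.aut Bset S.act S.aut) →ₗ[k]
      ((A ⊗[k] M) ⧸ relSubL Ac.mul Ac.aut Bset S.act S.aut)),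
    ρbar ∘ₗ (relSubL Ac.mul Ac.aut Bset S.act S.aut).mkQ =
      (TensorProduct.map (relSubL Ac.mul Ac.aut Bset S.act S.aut).mkQ LinearMap.id) ∘ₗ
        quotCoactPreL Ac S.aut →
    θ ∘ₗ (relSubL Ac.mul Ac.aut Bset S.act S.aut).mkQ =
      (relSubL Ac.mul Ac.aut Bset S.act S.aut).mkQ ∘ₗ
        TensorProduct.map Ac.aut.symm.toLinearMap S.aut.symm.toLinearMap →
    ((∀ m : M, ρbar ((relSubL Ac.mul Ac.aut Bset S.act S.aut).mkQ (Ac.one ⊗ₜ[k] S.aut.symm m)) =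
        θ ((relSubL Ac.mul Ac.aut Bset S.act S.aut).mkQ (Ac.one ⊗ₜ[k] S.aut.symm m)) ⊗ₜ[k] Hb.one) ∧
      Function.Injective
        (fun m : M => (relSubL Ac.mul Ac.aut Bset S.act S.aut).mkQ (Ac.one ⊗ₜ[k] S.aut.symm m)) ∧
      ∀ x, ρbar x = θ x ⊗ₜ[k] Hb.one →
        ∃ m : M, (relSubL Ac.mul Ac.aut Bset S.act S.aut).mkQ (Ac.one ⊗ₜ[k] S.aut.symm m) = x)

/-- The relations of `A ⊗_B N^{co H}` for a left-right (H,A)-Hom-Hopf module `N`. -/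
def relCoinvL {Hb : MonoidalHomBialgebra k H} (Ac : HomComoduleAlgebra Hb A)
    (Bset : Set A) {N : Type} [AddCommGroup N] [Module k N]
    (P : LRHomHopfModule Ac N) :
    Submodule k (A ⊗[k] (coinvSubmoduleOf Hb.one P.coact P.aut : Submodule k N)) :=
  Submodule.span k
    {x | ∃ (n n' n'' : coinvSubmoduleOf Hb.one P.coact P.aut) (a b : A), b ∈ Bset ∧
      (n' : N) = P.act b n ∧ (n'' : N) = P.aut n ∧
      x = Ac.aut a ⊗ₜ[k] n' - Ac.mul a b ⊗ₜ[k] n''}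

/-- The counit at the level of `A ⊗ N^{co H}`: `a ⊗ n ↦ a · n`. -/
def counitPreL {Hb : MonoidalHomBialgebra k H} (Ac : HomComoduleAlgebra Hb A)
    {N : Type} [AddCommGroup N] [Module k N] (P : LRHomHopfModule Ac N) :
    (A ⊗[k] (coinvSubmoduleOf Hb.one P.coact P.aut : Submodule k N)) →ₗ[k] N :=
  TensorProduct.lift (P.act.compl₂ (coinvSubmoduleOf Hb.one P.coact P.aut).subtype)

/-- Bijectivity of the counit `ε'_N : A ⊗_B N^{co H} → N`. -/
def CounitBijectiveL {Hb : MonoidalHomBialgebra k H} (Ac : HomComoduleAlgebra Hb A)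
    (Bset : Set A) {N : Type} [AddCommGroup N] [Module k N]
    (P : LRHomHopfModule Ac N) : Prop :=
  Function.Surjective (counitPreL Ac P) ∧ LinearMap.ker (counitPreL Ac P) = relCoinvL Ac Bset P

/-- A morphism of right `B`-Hom-modules. -/
def IsHomModuleOnHomR {Hb : MonoidalHomBialgebra k H} (Ac : HomComoduleAlgebra Hb A)
    (Bset : Set A) {M₁ M₂ : Type} [AddCommGroup M₁] [Module k M₁] [AddCommGroup M₂] [Module k M₂]
    (S₁ : HomModuleOn Ac Bset M₁) (S₂ : HomModuleOn Ac Bset M₂) (f : M₁ →ₗ[k] M₂) : Prop :=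
  (∀ m, ∀ b ∈ Bset, f (S₁.act m b) = S₂.act (f m) b) ∧ ∀ m, f (S₁.aut m) = S₂.aut (f m)

/-- A morphism of left `B`-Hom-modules. -/
def IsHomModuleOnHomL {Hb : MonoidalHomBialgebra k H} (Ac : HomComoduleAlgebra Hb A)
    (Bset : Set A) {M₁ M₂ : Type} [AddCommGroup M₁] [Module k M₁] [AddCommGroup M₂] [Module k M₂]
    (S₁ : HomLeftModuleOn Ac Bset M₁) (S₂ : HomLeftModuleOn Ac Bset M₂) (f : M₁ →ₗ[k] M₂) : Prop :=
  (∀ m, ∀ b ∈ Bset, f (S₁.act b m) = S₂.act b (f m)) ∧ ∀ m, f (S₁.aut m) = S₂.aut (f m)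

/-- `A` is faithfully flat as a left `B`-Hom-module: the induced functor `− ⊗_B A`
on right `B`-Hom-modules preserves and reflects exactness. -/
def FaithfullyFlatLeftOf {Hb : MonoidalHomBialgebra k H} (Ac : HomComoduleAlgebra Hb A)
    (Bset : Set A) : Prop :=
  ∀ (M₁ M₂ M₃ : Type) [AddCommGroup M₁] [Module k M₁] [AddCommGroup M₂] [Module k M₂]
    [AddCommGroup M₃] [Module k M₃]
    (S₁ : HomModuleOn Ac Bset M₁) (S₂ : HomModuleOn Ac Bset M₂) (S₃ : HomModuleOn Ac Bset M₃)
    (f : M₁ →ₗ[k] M₂) (g : M₂ →ₗ[k] M₃),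
    IsHomModuleOnHomR Ac Bset S₁ S₂ f → IsHomModuleOnHomR Ac Bset S₂ S₃ g →
    ∀ (fbar : ((M₁ ⊗[k] A) ⧸ relSubR Ac.mul Ac.aut Bset S₁.act S₁.aut) →ₗ[k]
        ((M₂ ⊗[k] A) ⧸ relSubR Ac.mul Ac.aut Bset S₂.act S₂.aut))
      (gbar : ((M₂ ⊗[k] A) ⧸ relSubR Ac.mul Ac.aut Bset S₂.act S₂.aut) →ₗ[k]
        ((M₃ ⊗[k] A) ⧸ relSubR Ac.mul Ac.aut Bset S₃.act S₃.aut)),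
      fbar ∘ₗ (relSubR Ac.mul Ac.aut Bset S₁.act S₁.aut).mkQ =
        (relSubR Ac.mul Ac.aut Bset S₂.act S₂.aut).mkQ ∘ₗ TensorProduct.map f LinearMap.id →
      gbar ∘ₗ (relSubR Ac.mul Ac.aut Bset S₂.act S₂.aut).mkQ =
        (relSubR Ac.mul Ac.aut Bset S₃.act S₃.aut).mkQ ∘ₗ TensorProduct.map g LinearMap.id →
      (LinearMap.range f = LinearMap.ker g ↔ LinearMap.range fbar = LinearMap.ker gbar)

/-- `A` is faithfully flat as a right `B`-Hom-module: the induced functor `A ⊗_B −`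
on left `B`-Hom-modules preserves and reflects exactness. -/
def FaithfullyFlatRightOf {Hb : MonoidalHomBialgebra k H} (Ac : HomComoduleAlgebra Hb A)
    (Bset : Set A) : Prop :=
  ∀ (M₁ M₂ M₃ : Type) [AddCommGroup M₁] [Module k M₁] [AddCommGroup M₂] [Module k M₂]
    [AddCommGroup M₃] [Module k M₃]
    (S₁ : HomLeftModuleOn Ac Bset M₁) (S₂ : HomLeftModuleOn Ac Bset M₂)
    (S₃ : HomLeftModuleOn Ac Bset M₃)
    (f : M₁ →ₗ[k] M₂) (g : M₂ →ₗ[k] M₃),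
    IsHomModuleOnHomL Ac Bset S₁ S₂ f → IsHomModuleOnHomL Ac Bset S₂ S₃ g →
    ∀ (fbar : ((A ⊗[k] M₁) ⧸ relSubL Ac.mul Ac.aut Bset S₁.act S₁.aut) →ₗ[k]
        ((A ⊗[k] M₂) ⧸ relSubL Ac.mul Ac.aut Bset S₂.act S₂.aut))
      (gbar : ((A ⊗[k] M₂) ⧸ relSubL Ac.mul Ac.aut Bset S₂.act S₂.aut) →ₗ[k]
        ((A ⊗[k] M₃) ⧸ relSubL Ac.mul Ac.aut Bset S₃.act S₃.aut)),
      fbar ∘ₗ (relSubL Ac.mul Ac.aut Bset S₁.act S₁.aut).mkQ =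
        (relSubL Ac.mul Ac.aut Bset S₂.act S₂.aut).mkQ ∘ₗ TensorProduct.map LinearMap.id f →
      gbar ∘ₗ (relSubL Ac.mul Ac.aut Bset S₂.act S₂.aut).mkQ =
        (relSubL Ac.mul Ac.aut Bset S₃.act S₃.aut).mkQ ∘ₗ TensorProduct.map LinearMap.id g →
      (LinearMap.range f = LinearMap.ker g ↔ LinearMap.range fbar = LinearMap.ker gbar)

/-- `A` is flat as a left `B`-Hom-module: `− ⊗_B A` preserves exactness. -/
def FlatLeftOf {Hb : MonoidalHomBialgebra k H} (Ac : HomComoduleAlgebra Hb A)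
    (Bset : Set A) : Prop :=
  ∀ (M₁ M₂ M₃ : Type) [AddCommGroup M₁] [Module k M₁] [AddCommGroup M₂] [Module k M₂]
    [AddCommGroup M₃] [Module k M₃]
    (S₁ : HomModuleOn Ac Bset M₁) (S₂ : HomModuleOn Ac Bset M₂) (S₃ : HomModuleOn Ac Bset M₃)
    (f : M₁ →ₗ[k] M₂) (g : M₂ →ₗ[k] M₃),
    IsHomModuleOnHomR Ac Bset S₁ S₂ f → IsHomModuleOnHomR Ac Bset S₂ S₃ g →
    ∀ (fbar : ((M₁ ⊗[k] A) ⧸ relSubR Ac.mul Ac.aut Bset S₁.act S₁.aut) →ₗ[k]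
        ((M₂ ⊗[k] A) ⧸ relSubR Ac.mul Ac.aut Bset S₂.act S₂.aut))
      (gbar : ((M₂ ⊗[k] A) ⧸ relSubR Ac.mul Ac.aut Bset S₂.act S₂.aut) →ₗ[k]
        ((M₃ ⊗[k] A) ⧸ relSubR Ac.mul Ac.aut Bset S₃.act S₃.aut)),
      fbar ∘ₗ (relSubR Ac.mul Ac.aut Bset S₁.act S₁.aut).mkQ =
        (relSubR Ac.mul Ac.aut Bset S₂.act S₂.aut).mkQ ∘ₗ TensorProduct.map f LinearMap.id →
      gbar ∘ₗ (relSubR Ac.mul Ac.aut Bset S₂.act S₂.aut).mkQ =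
        (relSubR Ac.mul Ac.aut Bset S₃.act S₃.aut).mkQ ∘ₗ TensorProduct.map g LinearMap.id →
      (LinearMap.range f = LinearMap.ker g → LinearMap.range fbar = LinearMap.ker gbar)

end

/-!
Replacing the product `ab` by `β⁻¹(ab)` and a coaction `ρ` by `ρ ∘ β` turns Hom-structures into
ordinary ones. There `Δ ∘ S = (S ⊗ S) ∘ Δᵒᵖ`, so applying `ρ` to `t(a) = a₍₀₎ φ(S(a₍₁₎))` and
cancelling `a₍₁₎ S(a₍₂₎)` shows `t(a) ∈ B`. As `t(1) = 1`, the map `φ_M` is a left inverse of `η_M`.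
Conversely, `M ⊗_B A` is a right `A`-Hom-module, and acting on `x₍₀₎` with `φ(S(x₍₁₎))` returns `x`
when `x` is coinvariant, because `φ(S(1)) = 1`; for `x = m ⊗ a` it returns `m ⊗ t(a)`, which equals
`η_M(m · t(a))` because `t(a)` may be moved across `⊗_B`.
-/

noncomputable section

section Convolution

open LinearMap WithConv Coalgebra HopfAlgebra

variable {R C V B B' : Type*} [CommSemiring R] [AddCommMonoid C] [Module R C]
  [AddCommMonoid V] [Module R V] [Semiring B] [Algebra R B] [Semiring B'] [Algebra R B']

/-- The right action of the convolution algebra `Hom(C, B)` on `Hom(V, B)` induced by a coaction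
`ρ : V → V ⊗ C`, namely `(f ◁ g)(v) = f(v₍₀₎) g(v₍₁₎)`. -/
def convAct (ρ : V →ₗ[R] V ⊗[R] C) (f : V →ₗ[R] B) (g : WithConv (C →ₗ[R] B)) : V →ₗ[R] B :=
  mul' R B ∘ₗ TensorProduct.map f g.ofConv ∘ₗ ρ

theorem convAct_convAct [Coalgebra R C] {ρ : V →ₗ[R] V ⊗[R] C}
    (hρ : (TensorProduct.assoc R V C C).toLinearMap ∘ₗ ρ.rTensor C ∘ₗ ρ = comul.lTensor V ∘ₗ ρ)
    (f : V →ₗ[R] B) (g h : WithConv (C →ₗ[R] B)) :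
    convAct ρ (convAct ρ f g) h = convAct ρ f (g * h) := by
  have mul_mul : mul' R B ∘ₗ TensorProduct.map (mul' R B ∘ₗ TensorProduct.map f g.ofConv) h.ofConv =
      (mul' R B ∘ₗ TensorProduct.map f (mul' R B ∘ₗ TensorProduct.map g.ofConv h.ofConv)) ∘ₗ
        (TensorProduct.assoc R V C C).toLinearMap := by
    ext
    simp [mul_assoc]
  calc
    _ = (mul' R B ∘ₗ TensorProduct.map (mul' R B ∘ₗ TensorProduct.map f g.ofConv) h.ofConv) ∘ₗ
        ρ.rTensor C ∘ₗ ρ := by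
      simp only [convAct, comp_assoc, ← comp_assoc _ (ρ.rTensor C), map_comp_rTensor]
    _ = (mul' R B ∘ₗ TensorProduct.map f (mul' R B ∘ₗ TensorProduct.map g.ofConv h.ofConv)) ∘ₗ
        comul.lTensor V ∘ₗ ρ := by rw [mul_mul, comp_assoc, hρ]
    _ = _ := by
      simp only [convAct, LinearMap.convMul_def, comp_assoc, ← comp_assoc _ (comul.lTensor V),
        map_comp_lTensor]

theorem algHom_comp_convAct (h : B →ₐ[R] B') (ρ : V →ₗ[R] V ⊗[R] C) (f : V →ₗ[R] B)
    (g : WithConv (C →ₗ[R] B)) :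
    h.toLinearMap ∘ₗ convAct ρ f g =
      convAct ρ (h.toLinearMap ∘ₗ f) (toConv (h.toLinearMap ∘ₗ g.ofConv)) := by
  have h_mul : h.toLinearMap ∘ₗ mul' R B ∘ₗ TensorProduct.map f g.ofConv =
      mul' R B' ∘ₗ TensorProduct.map (h.toLinearMap ∘ₗ f) (h.toLinearMap ∘ₗ g.ofConv) := by
    ext
    simp
  simpa only [convAct, comp_assoc] using congrArg (· ∘ₗ ρ) h_mul

theorem convAct_includeLeft_includeRight {C : Type*} [Semiring C] [Algebra R C]
    (ρ : B →ₗ[R] B ⊗[R] C) :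
    convAct ρ (Algebra.TensorProduct.includeLeft : B →ₐ[R] B ⊗[R] C).toLinearMap
      (toConv (Algebra.TensorProduct.includeRight : C →ₐ[R] B ⊗[R] C).toLinearMap) = ρ := by
  have mul_includes : mul' R (B ⊗[R] C) ∘ₗ TensorProduct.map
      (Algebra.TensorProduct.includeLeft : B →ₐ[R] B ⊗[R] C).toLinearMap
      (Algebra.TensorProduct.includeRight : C →ₐ[R] B ⊗[R] C).toLinearMap = LinearMap.id := by
    ext
    simp
  simpa only [convAct, comp_assoc, id_comp] using congrArg (· ∘ₗ ρ) mul_includes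

end Convolution

section Antipode

open LinearMap WithConv Coalgebra Bialgebra HopfAlgebra Algebra.TensorProduct

variable {R H B : Type*} [CommSemiring R] [Semiring H] [HopfAlgebra R H] [Semiring B] [Algebra R B]

theorem toConv_algHom_comp_antipode_mul (f : H →ₐ[R] B) :
    toConv (f.toLinearMap ∘ₗ antipode R) * toConv f.toLinearMap = 1 := by
  have h := algHom_comp_convMul_distrib f (toConv (antipode R (A := H))) (toConv LinearMap.id)
  rw [antipode_mul_id] at h
  refine (congrArg toConv h).symm.trans ?_
  ext
  simp

theorem toConv_algHom_mul_comp_antipode (f : H →ₐ[R] B) :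
    toConv f.toLinearMap * toConv (f.toLinearMap ∘ₗ antipode R) = 1 := by
  have h := algHom_comp_convMul_distrib f (toConv LinearMap.id) (toConv (antipode R (A := H)))
  rw [id_mul_antipode] at h
  refine (congrArg toConv h).symm.trans ?_
  ext
  simp

-- Both sides are convolution inverses of `comul`.
theorem comul_comp_antipode :
    (comul : H →ₗ[R] H ⊗[R] H) ∘ₗ antipode R =
      TensorProduct.map (antipode R) (antipode R) ∘ₗ
        (TensorProduct.comm R H H).toLinearMap ∘ₗ comul := by
  let i₁ : H →ₐ[R] H ⊗[R] H := includeLeft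
  let i₂ : H →ₐ[R] H ⊗[R] H := includeRight
  have comul_eq : toConv (comul : H →ₗ[R] H ⊗[R] H) =
      toConv i₁.toLinearMap * toConv i₂.toLinearMap :=
    congrArg toConv (convAct_includeLeft_includeRight comul).symm
  have flip_eq : toConv (TensorProduct.map (antipode R) (antipode R) ∘ₗ
        (TensorProduct.comm R H H).toLinearMap ∘ₗ (comul : H →ₗ[R] H ⊗[R] H)) =
      toConv (i₂.toLinearMap ∘ₗ antipode R) * toConv (i₁.toLinearMap ∘ₗ antipode R) := by
    have : TensorProduct.map (antipode R) (antipode R) ∘ₗ (TensorProduct.comm R H H).toLinearMap =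
        mul' R (H ⊗[R] H) ∘ₗ
          TensorProduct.map (i₂.toLinearMap ∘ₗ antipode R) (i₁.toLinearMap ∘ₗ antipode R) := by
      ext
      simp [i₁, i₂]
    exact congrArg (fun f ↦ toConv (f ∘ₗ comul)) this
  refine toConv_injective (left_inv_eq_right_inv
    (toConv_algHom_comp_antipode_mul (comulAlgHom R H)) ?_)
  change toConv (comul : H →ₗ[R] H ⊗[R] H) * _ = 1
  rw [flip_eq, comul_eq, mul_assoc, ← mul_assoc (toConv i₂.toLinearMap),
    toConv_algHom_mul_comp_antipode, one_mul, toConv_algHom_mul_comp_antipode]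

variable {A : Type*} [Semiring A] [Algebra R A] {ρ : A →ₐ[R] A ⊗[R] H} {φ : H →ₗ[R] A}

theorem coact_comp_colinear_comp_antipode
    (hφ : ρ.toLinearMap ∘ₗ φ = φ.rTensor H ∘ₗ comul) :
    toConv (ρ.toLinearMap ∘ₗ φ ∘ₗ antipode R) =
      toConv ((includeRight : H →ₐ[R] A ⊗[R] H).toLinearMap ∘ₗ antipode R) *
        toConv ((includeLeft : A →ₐ[R] A ⊗[R] H).toLinearMap ∘ₗ φ ∘ₗ antipode R) := by
  have rTensor_map_comm : φ.rTensor H ∘ₗ TensorProduct.map (antipode R) (antipode R) ∘ₗ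
        (TensorProduct.comm R H H).toLinearMap =
      mul' R (A ⊗[R] H) ∘ₗ
        TensorProduct.map ((includeRight : H →ₐ[R] A ⊗[R] H).toLinearMap ∘ₗ antipode R)
          ((includeLeft : A →ₐ[R] A ⊗[R] H).toLinearMap ∘ₗ φ ∘ₗ antipode R) := by
    ext
    simp
  rw [← comp_assoc, hφ, comp_assoc, comul_comp_antipode]
  exact congrArg (fun f ↦ toConv (f ∘ₗ comul)) rTensor_map_comm

-- `ρ(a₍₀₎ φ(S a₍₁₎)) = a₍₀₎ φ(S a₍₃₎) ⊗ a₍₁₎ S(a₍₂₎)`, and the antipode axiom collapses the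
-- second leg.
theorem coact_comp_convAct_id_comp_antipode
    (hρ : (TensorProduct.assoc R A H H).toLinearMap ∘ₗ ρ.toLinearMap.rTensor H ∘ₗ ρ.toLinearMap =
      comul.lTensor A ∘ₗ ρ.toLinearMap)
    (hφ : ρ.toLinearMap ∘ₗ φ = φ.rTensor H ∘ₗ comul) :
    ρ.toLinearMap ∘ₗ convAct ρ.toLinearMap LinearMap.id (toConv (φ ∘ₗ antipode R)) =
      (includeLeft : A →ₐ[R] A ⊗[R] H).toLinearMap ∘ₗ
        convAct ρ.toLinearMap LinearMap.id (toConv (φ ∘ₗ antipode R)) := by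
  let i₁ : A →ₐ[R] A ⊗[R] H := includeLeft
  let i₂ : H →ₐ[R] A ⊗[R] H := includeRight
  let δ := ρ.toLinearMap
  calc
    _ = convAct δ δ (toConv (δ ∘ₗ φ ∘ₗ antipode R)) := by
      rw [algHom_comp_convAct, comp_id]
    _ = convAct δ (convAct δ i₁.toLinearMap (toConv i₂.toLinearMap))
        (toConv (i₂.toLinearMap ∘ₗ antipode R) * toConv (i₁.toLinearMap ∘ₗ φ ∘ₗ antipode R)) := by
      rw [coact_comp_colinear_comp_antipode hφ, convAct_includeLeft_includeRight]
    _ = convAct δ i₁.toLinearMap (toConv (i₁.toLinearMap ∘ₗ φ ∘ₗ antipode R)) := by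
      rw [convAct_convAct hρ, ← mul_assoc, toConv_algHom_mul_comp_antipode, one_mul]
    _ = _ := by
      rw [algHom_comp_convAct, comp_id]

end Antipode

section Untwist

/-- A monoidal Hom-algebra: a twisted unital associative algebra, the part of the axioms that
`MonoidalHomBialgebra` and `HomComoduleAlgebra` have in common. -/
structure MonoidalHomAlgebra (R A : Type*) [CommSemiring R] [AddCommMonoid A] [Module R A] where
  mul : A →ₗ[R] A →ₗ[R] A
  one : A
  aut : A ≃ₗ[R] A
  hom_assoc : ∀ a b c, mul (aut a) (mul b c) = mul (mul a b) (aut c)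
  mul_one : ∀ a, mul a one = aut a
  one_mul : ∀ a, mul one a = aut a
  aut_mul : ∀ a b, aut (mul a b) = mul (aut a) (aut b)

namespace MonoidalHomAlgebra

variable {R A A' : Type*} [CommSemiring R] [AddCommMonoid A] [Module R A]
  [AddCommMonoid A'] [Module R A'] (T : MonoidalHomAlgebra R A) (T' : MonoidalHomAlgebra R A')

theorem aut_symm_mul_aut_aut (a b : A) : T.aut.symm (T.mul (T.aut a) (T.aut b)) = T.mul a b := by
  rw [← T.aut_mul, T.aut.symm_apply_apply]

theorem aut_symm_mul_assoc (a b c : A) :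
    T.aut.symm (T.mul (T.aut.symm (T.mul a b)) c) =
      T.aut.symm (T.mul a (T.aut.symm (T.mul b c))) := by
  refine congrArg T.aut.symm (T.aut.injective ?_)
  simp only [T.aut_mul, T.aut.apply_symm_apply, T.hom_assoc]

/-- The ordinary algebra underlying a monoidal Hom-algebra `(A, β)`: the module `A` with the
product `β⁻¹(ab)`. -/
def Untwist (_T : MonoidalHomAlgebra R A) : Type _ := A

instance : AddCommMonoid T.Untwist := inferInstanceAs (AddCommMonoid A)

instance : Module R T.Untwist := inferInstanceAs (Module R A)

instance : Semiring T.Untwist where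
  __ := (inferInstance : AddCommMonoid T.Untwist)
  mul a b := T.aut.symm (T.mul a b)
  one := T.one
  left_distrib a b c := ((T.aut.symm.toLinearMap ∘ₗ T.mul a).map_add b c :)
  right_distrib a b c := (T.mul.compr₂ T.aut.symm.toLinearMap).map_add₂ a b c
  zero_mul a := (T.mul.compr₂ T.aut.symm.toLinearMap).map_zero₂ a
  mul_zero a := ((T.aut.symm.toLinearMap ∘ₗ T.mul a).map_zero :)
  mul_assoc := T.aut_symm_mul_assoc
  one_mul a := T.aut.symm_apply_eq.2 (T.one_mul a)
  mul_one a := T.aut.symm_apply_eq.2 (T.mul_one a)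

instance : Algebra R T.Untwist :=
  Algebra.ofModule (fun r a b ↦ (T.mul.compr₂ T.aut.symm.toLinearMap).map_smul₂ r a b)
    fun r a b ↦ ((T.aut.symm.toLinearMap ∘ₗ T.mul a).map_smul r b :)

theorem mul'_untwist :
    LinearMap.mul' R T.Untwist = T.aut.symm.toLinearMap ∘ₗ TensorProduct.lift T.mul :=
  TensorProduct.ext rfl

theorem mul'_untwist_tensor_comp_map_aut :
    LinearMap.mul' R (T.Untwist ⊗[R] T'.Untwist) ∘ₗ
        TensorProduct.map (TensorProduct.map T.aut.toLinearMap T'.aut.toLinearMap)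
          (TensorProduct.map T.aut.toLinearMap T'.aut.toLinearMap) =
      TensorProduct.map (TensorProduct.lift T.mul) (TensorProduct.lift T'.mul) ∘ₗ
        (TensorProduct.tensorTensorTensorComm R A A' A A').toLinearMap := by
  ext a a' b b'
  exact (Algebra.TensorProduct.tmul_mul_tmul (A := T.Untwist) (B := T'.Untwist) _ _ _ _).trans
    (congrArg₂ (· ⊗ₜ[R] ·) (T.aut_symm_mul_aut_aut a b) (T'.aut_symm_mul_aut_aut a' b'))

section Coaction

variable {T T'} {ρ : A →ₗ[R] A ⊗[R] A'}

theorem coact_mul_eq_mul'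
    (coact_aut : ρ ∘ₗ T.aut.toLinearMap =
      TensorProduct.map T.aut.toLinearMap T'.aut.toLinearMap ∘ₗ ρ)
    (coact_mul : ρ ∘ₗ TensorProduct.lift T.mul =
      TensorProduct.map (TensorProduct.lift T.mul) (TensorProduct.lift T'.mul) ∘ₗ
        (TensorProduct.tensorTensorTensorComm R A A' A A').toLinearMap ∘ₗ TensorProduct.map ρ ρ)
    (a b : A) :
    ρ (T.mul a b) =
      LinearMap.mul' R (T.Untwist ⊗[R] T'.Untwist) (ρ (T.aut a) ⊗ₜ ρ (T.aut b)) := by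
  have ρ_aut (a : A) : TensorProduct.map T.aut.toLinearMap T'.aut.toLinearMap (ρ a) = ρ (T.aut a) :=
    (LinearMap.congr_fun coact_aut a).symm
  have mul_ρ := LinearMap.congr_fun (mul'_untwist_tensor_comp_map_aut T T') (ρ a ⊗ₜ[R] ρ b)
  exact (LinearMap.congr_fun coact_mul (a ⊗ₜ[R] b)).trans <| mul_ρ.symm.trans <|
    congrArg₂ (fun x y ↦ LinearMap.mul' R (T.Untwist ⊗[R] T'.Untwist) (x ⊗ₜ y)) (ρ_aut a) (ρ_aut b)

/-- The algebra homomorphism `ρ ∘ β` on untwisted algebras induced by a coaction `ρ` that is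
multiplicative in the sense of Hom-algebras. -/
def untwistCoact
    (coact_aut : ρ ∘ₗ T.aut.toLinearMap =
      TensorProduct.map T.aut.toLinearMap T'.aut.toLinearMap ∘ₗ ρ)
    (coact_mul : ρ ∘ₗ TensorProduct.lift T.mul =
      TensorProduct.map (TensorProduct.lift T.mul) (TensorProduct.lift T'.mul) ∘ₗ
        (TensorProduct.tensorTensorTensorComm R A A' A A').toLinearMap ∘ₗ TensorProduct.map ρ ρ)
    (coact_one : ρ (T.aut T.one) = T.one ⊗ₜ T'.one) :
    T.Untwist →ₐ[R] T.Untwist ⊗[R] T'.Untwist :=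
  AlgHom.ofLinearMap (ρ ∘ₗ T.aut.toLinearMap) coact_one fun a b ↦
    (congrArg ρ (T.aut.apply_symm_apply _)).trans (coact_mul_eq_mul' coact_aut coact_mul a b)

end Coaction

end MonoidalHomAlgebra

theorem untwist_coassoc {R V C : Type*} [CommSemiring R] [AddCommMonoid V] [Module R V]
    [AddCommMonoid C] [Module R C] {ρ : V →ₗ[R] V ⊗[R] C} {δ : C →ₗ[R] C ⊗[R] C}
    {a : V ≃ₗ[R] V} {b : C ≃ₗ[R] C}
    (coact_aut : ρ ∘ₗ a.toLinearMap = TensorProduct.map a.toLinearMap b.toLinearMap ∘ₗ ρ)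
    (coassoc : TensorProduct.map a.symm.toLinearMap δ ∘ₗ ρ =
      (TensorProduct.assoc R V C C).toLinearMap ∘ₗ
        TensorProduct.map ρ b.symm.toLinearMap ∘ₗ ρ) :
    (TensorProduct.assoc R V C C).toLinearMap ∘ₗ (ρ ∘ₗ a.toLinearMap).rTensor C ∘ₗ
        (ρ ∘ₗ a.toLinearMap) =
      (δ ∘ₗ b.toLinearMap).lTensor V ∘ₗ (ρ ∘ₗ a.toLinearMap) := by
  have rTensor_eq : (ρ ∘ₗ a.toLinearMap).rTensor C =
      TensorProduct.map ρ b.symm.toLinearMap ∘ₗ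
        TensorProduct.map a.toLinearMap b.toLinearMap := by
    ext
    simp
  have lTensor_eq : (δ ∘ₗ b.toLinearMap).lTensor V =
      TensorProduct.map a.symm.toLinearMap δ ∘ₗ
        TensorProduct.map a.toLinearMap b.toLinearMap := by
    ext
    simp
  have coact_aut_aut : TensorProduct.map a.toLinearMap b.toLinearMap ∘ₗ ρ ∘ₗ a.toLinearMap =
      ρ ∘ₗ a.toLinearMap ∘ₗ a.toLinearMap := by
    rw [← LinearMap.comp_assoc, ← coact_aut, LinearMap.comp_assoc]
  rw [rTensor_eq, lTensor_eq, LinearMap.comp_assoc, LinearMap.comp_assoc, coact_aut_aut]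
  simpa only [LinearMap.comp_assoc] using
    congrArg (· ∘ₗ a.toLinearMap ∘ₗ a.toLinearMap) coassoc.symm

variable {k : Type} [Field k] {H : Type} [AddCommGroup H] [Module k H]
  {A : Type} [AddCommGroup A] [Module k A]

namespace MonoidalHomBialgebra

variable (Hb : MonoidalHomBialgebra k H)

/-- The Hom-algebra underlying a monoidal Hom-bialgebra. -/
def toHomAlgebra : MonoidalHomAlgebra k H where
  mul := Hb.mul
  one := Hb.one
  aut := Hb.aut
  hom_assoc := Hb.hom_assoc
  mul_one := Hb.mulOne
  one_mul := Hb.oneMul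
  aut_mul := Hb.aut_mul

theorem rTensor_counit_comp_comul_comp_aut :
    Hb.counit.rTensor H ∘ₗ Hb.comul ∘ₗ Hb.aut.toLinearMap = TensorProduct.mk k k H 1 := by
  ext x
  apply (TensorProduct.lid k H).injective
  simpa [LinearMap.rTensor] using LinearMap.congr_fun Hb.counit_left (Hb.aut x)

theorem lTensor_counit_comp_comul_comp_aut :
    Hb.counit.lTensor H ∘ₗ Hb.comul ∘ₗ Hb.aut.toLinearMap = (TensorProduct.mk k H k).flip 1 := by
  ext x
  apply (TensorProduct.rid k H).injective
  simpa [LinearMap.lTensor] using LinearMap.congr_fun Hb.counit_right (Hb.aut x)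

theorem counit_aut_symm_mul (a b : H) :
    Hb.counit (Hb.aut.symm (Hb.mul a b)) = Hb.counit a * Hb.counit b := by
  rw [← Hb.counit_mul, ← LinearMap.congr_fun Hb.counit_aut]
  simp

theorem aut_symm_comp_unit_counit_comp_aut :
    Hb.aut.symm.toLinearMap ∘ₗ (LinearMap.toSpanSingleton k H Hb.one ∘ₗ Hb.counit) ∘ₗ
        Hb.aut.toLinearMap =
      LinearMap.toSpanSingleton k H Hb.one ∘ₗ Hb.counit := by
  have aut_symm_one : Hb.aut.symm Hb.one = Hb.one := Hb.aut.symm_apply_eq.2 Hb.aut_one.symm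
  rw [LinearMap.comp_assoc, Hb.counit_aut]
  ext
  simp [aut_symm_one]

instance : Coalgebra k Hb.toHomAlgebra.Untwist where
  comul := Hb.comul ∘ₗ Hb.aut.toLinearMap
  counit := Hb.counit
  coassoc := untwist_coassoc Hb.comul_aut Hb.coassoc.symm
  rTensor_counit_comp_comul := Hb.rTensor_counit_comp_comul_comp_aut
  lTensor_counit_comp_comul := Hb.lTensor_counit_comp_comul_comp_aut

/-- The untwisted comultiplication `Δ ∘ α` as an algebra homomorphism. -/
def untwistComul : Hb.toHomAlgebra.Untwist →ₐ[k]
    Hb.toHomAlgebra.Untwist ⊗[k] Hb.toHomAlgebra.Untwist :=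
  MonoidalHomAlgebra.untwistCoact Hb.comul_aut Hb.comul_mul
    ((congrArg Hb.comul Hb.aut_one).trans Hb.comul_one)

instance : Bialgebra k Hb.toHomAlgebra.Untwist :=
  .mk' k Hb.toHomAlgebra.Untwist Hb.counit_one (Hb.counit_aut_symm_mul _ _)
    (map_one Hb.untwistComul) (map_mul Hb.untwistComul _ _)

end MonoidalHomBialgebra

instance (Hh : MonoidalHomHopf k H) :
    HopfAlgebra k Hh.toMonoidalHomBialgebra.toHomAlgebra.Untwist where
  antipode := Hh.antipode
  mul_antipode_rTensor_comul := by
    rw [MonoidalHomAlgebra.mul'_untwist]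
    exact (congrArg (Hh.aut.symm.toLinearMap ∘ₗ · ∘ₗ Hh.aut.toLinearMap)
      Hh.antipode_mul_left).trans Hh.aut_symm_comp_unit_counit_comp_aut
  mul_antipode_lTensor_comul := by
    rw [MonoidalHomAlgebra.mul'_untwist]
    exact (congrArg (Hh.aut.symm.toLinearMap ∘ₗ · ∘ₗ Hh.aut.toLinearMap)
      Hh.antipode_mul_right).trans Hh.aut_symm_comp_unit_counit_comp_aut

theorem MonoidalHomHopf.antipode_one (Hh : MonoidalHomHopf k H) : Hh.antipode Hh.one = Hh.one :=
  HopfAlgebra.antipode_one (R := k) (A := Hh.toMonoidalHomBialgebra.toHomAlgebra.Untwist)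

namespace HomComoduleAlgebra

variable {Hb : MonoidalHomBialgebra k H} (Ac : HomComoduleAlgebra Hb A)

/-- The Hom-algebra underlying a Hom-comodule algebra. -/
def toHomAlgebra : MonoidalHomAlgebra k A where
  mul := Ac.mul
  one := Ac.one
  aut := Ac.aut
  hom_assoc := Ac.hom_assoc
  mul_one := Ac.mulOne
  one_mul := Ac.oneMul
  aut_mul := Ac.aut_mul

/-- The coaction `ρ ∘ β` of the untwisted bialgebra on the untwisted algebra. -/
def untwistCoact :
    Ac.toHomAlgebra.Untwist →ₐ[k] Ac.toHomAlgebra.Untwist ⊗[k] Hb.toHomAlgebra.Untwist :=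
  MonoidalHomAlgebra.untwistCoact Ac.coact_aut Ac.coact_mul
    ((congrArg Ac.coact Ac.aut_one).trans Ac.coact_one)

/-- The map `a ↦ a₍₀₎ ψ(a₍₁₎)`; for `ψ = φ ∘ S` with `φ` a total integral it is the trace
`t : A → B`. -/
def trace (ψ : H →ₗ[k] A) : A →ₗ[k] A :=
  TensorProduct.lift Ac.mul ∘ₗ TensorProduct.map LinearMap.id ψ ∘ₗ Ac.coact

end HomComoduleAlgebra

theorem IsTotalIntegral.comp_antipode_comp_aut {Hh : MonoidalHomHopf k H}
    {Ac : HomComoduleAlgebra Hh.toMonoidalHomBialgebra A} {φ : H →ₗ[k] A}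
    (hφ : IsTotalIntegral Ac φ) :
    (φ ∘ₗ Hh.antipode) ∘ₗ Hh.aut.toLinearMap = Ac.aut.toLinearMap ∘ₗ φ ∘ₗ Hh.antipode := by
  rw [LinearMap.comp_assoc, Hh.antipode_aut, ← LinearMap.comp_assoc, hφ.1, LinearMap.comp_assoc]

theorem IsTotalIntegral.comp_antipode_one {Hh : MonoidalHomHopf k H}
    {Ac : HomComoduleAlgebra Hh.toMonoidalHomBialgebra A} {φ : H →ₗ[k] A}
    (hφ : IsTotalIntegral Ac φ) : (φ ∘ₗ Hh.antipode) Hh.one = Ac.one :=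
  (congrArg φ Hh.antipode_one).trans hφ.2.2

theorem IsTotalIntegral.untwistCoact_comp {Hb : MonoidalHomBialgebra k H}
    {Ac : HomComoduleAlgebra Hb A} {φ : H →ₗ[k] A} (hφ : IsTotalIntegral Ac φ) :
    Ac.coact ∘ₗ Ac.aut.toLinearMap ∘ₗ φ = φ.rTensor H ∘ₗ Hb.comul ∘ₗ Hb.aut.toLinearMap := by
  rw [← hφ.1, ← LinearMap.comp_assoc, hφ.2.1]
  rfl

theorem HomComoduleAlgebra.trace_mem_coinvA {Hh : MonoidalHomHopf k H}
    {Ac : HomComoduleAlgebra Hh.toMonoidalHomBialgebra A} {φ : H →ₗ[k] A}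
    (hφ : IsTotalIntegral Ac φ) (a : A) : Ac.trace (φ ∘ₗ Hh.antipode) a ∈ coinvA Ac := by
  let t := Ac.trace (φ ∘ₗ Hh.antipode)
  let t' : Ac.toHomAlgebra.Untwist →ₗ[k] Ac.toHomAlgebra.Untwist :=
    convAct (C := Hh.toHomAlgebra.Untwist) Ac.untwistCoact.toLinearMap LinearMap.id
      (WithConv.toConv (φ ∘ₗ Hh.antipode))
  have t'_eq : t' = Ac.aut.symm.toLinearMap ∘ₗ t ∘ₗ Ac.aut.toLinearMap := by
    simp only [t', convAct, MonoidalHomAlgebra.mul'_untwist]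
    rfl
  have t'_coinv : Ac.untwistCoact.toLinearMap ∘ₗ t' =
      Algebra.TensorProduct.includeLeft.toLinearMap ∘ₗ t' :=
    coact_comp_convAct_id_comp_antipode (untwist_coassoc Ac.coact_aut Ac.coassoc)
      hφ.untwistCoact_comp
  have t_coinv (a : A) : Ac.coact (Ac.aut (Ac.aut.symm (t (Ac.aut a)))) =
      Ac.aut.symm (t (Ac.aut a)) ⊗ₜ Hh.one :=
    LinearMap.congr_fun (t'_eq ▸ t'_coinv) a
  change Ac.coact (t a) = Ac.aut.symm (t a) ⊗ₜ Hh.one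
  simpa using t_coinv (Ac.aut.symm a)

end Untwist

section ExtendScalars

variable {k : Type} [Field k] {H : Type} [AddCommGroup H] [Module k H]
  {A : Type} [AddCommGroup A] [Module k A] {Hb : MonoidalHomBialgebra k H}
  {Ac : HomComoduleAlgebra Hb A}

theorem HomComoduleAlgebra.aut_symm_one (Ac : HomComoduleAlgebra Hb A) :
    Ac.aut.symm Ac.one = Ac.one :=
  Ac.aut.symm_apply_eq.2 Ac.aut_one.symm

theorem HomComoduleAlgebra.trace_one {ψ : H →ₗ[k] A} (hψ : ψ Hb.one = Ac.one) :
    Ac.trace ψ Ac.one = Ac.one := by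
  simp [HomComoduleAlgebra.trace, Ac.coact_one, hψ, Ac.mulOne, Ac.aut_one]

theorem HomComoduleAlgebra.mapsTo_aut_coinvA : Set.MapsTo Ac.aut (coinvA Ac) (coinvA Ac) := by
  intro b (hb : Ac.coact b = Ac.aut.symm b ⊗ₜ Hb.one)
  change Ac.coact (Ac.aut b) = Ac.aut.symm (Ac.aut b) ⊗ₜ Hb.one
  refine (LinearMap.congr_fun Ac.coact_aut b).trans ?_
  simp [hb, Hb.aut_one]

theorem HomComoduleAlgebra.mapsTo_aut_symm_coinvA :
    Set.MapsTo Ac.aut.symm (coinvA Ac) (coinvA Ac) := by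
  intro b (hb : Ac.coact b = Ac.aut.symm b ⊗ₜ Hb.one)
  change Ac.coact (Ac.aut.symm b) = Ac.aut.symm (Ac.aut.symm b) ⊗ₜ Hb.one
  have map_aut_injective :
      Function.Injective (TensorProduct.map Ac.aut.toLinearMap Hb.aut.toLinearMap) :=
    (TensorProduct.congr Ac.aut Hb.aut).injective
  refine map_aut_injective ((LinearMap.congr_fun Ac.coact_aut _).symm.trans ?_)
  simp [hb, Hb.aut_one]

namespace HomModuleOn

variable {Bset : Set A} {M : Type} [AddCommGroup M] [Module k M] (S : HomModuleOn Ac Bset M)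

/-- The tensor product `M ⊗_B A`. -/
abbrev ExtendScalars : Type := (M ⊗[k] A) ⧸ relSubR Ac.mul Ac.aut Bset S.act S.aut

/-- The projection `M ⊗ A → M ⊗_B A`. -/
abbrev mkTensor : M ⊗[k] A →ₗ[k] S.ExtendScalars :=
  (relSubR Ac.mul Ac.aut Bset S.act S.aut).mkQ

theorem mkTensor_act_tmul (m : M) {b : A} (hb : b ∈ Bset) (a : A) :
    S.mkTensor (S.act m b ⊗ₜ Ac.aut a) = S.mkTensor (S.aut m ⊗ₜ Ac.mul b a) :=
  (Submodule.Quotient.eq _).2 (Submodule.subset_span ⟨m, a, b, hb, rfl⟩)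

/-- The map `(m ⊗ a) ⊗ a' ↦ μ(m) ⊗ a β⁻¹(a')` from `M ⊗ A` with values in `M ⊗_B A`. -/
def extendScalarsActPre : M ⊗[k] A →ₗ[k] A →ₗ[k] S.ExtendScalars :=
  ((TensorProduct.mapBilinear (RingHom.id k) M A M A S.aut.toLinearMap ∘ₗ
    Ac.mul.flip ∘ₗ Ac.aut.symm.toLinearMap).compr₂ S.mkTensor).flip

theorem relSubR_le_ker_extendScalarsActPre (hB : Set.MapsTo Ac.aut Bset Bset) :
    relSubR Ac.mul Ac.aut Bset S.act S.aut ≤ LinearMap.ker S.extendScalarsActPre := by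
  refine Submodule.span_le.2 ?_
  rintro _ ⟨m, a, b, hb, rfl⟩
  refine LinearMap.sub_mem_ker_iff.2 (LinearMap.ext fun a' ↦ ?_)
  have twice_aut_symm : Ac.aut.symm a' = Ac.aut (Ac.aut.symm (Ac.aut.symm a')) := by simp
  have h := S.mkTensor_act_tmul (S.aut m) (hB hb) (Ac.mul a (Ac.aut.symm (Ac.aut.symm a')))
  rw [Ac.aut_mul, ← twice_aut_symm, Ac.hom_assoc, ← twice_aut_symm, ← S.aut_act _ _ hb] at h
  simpa [extendScalarsActPre] using h

/-- The right Hom-action `(m ⊗ a) · a' = μ(m) ⊗ a β⁻¹(a')` of `A` on `M ⊗_B A`. -/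
def extendScalarsAct (hB : Set.MapsTo Ac.aut Bset Bset) :
    S.ExtendScalars →ₗ[k] A →ₗ[k] S.ExtendScalars :=
  (relSubR Ac.mul Ac.aut Bset S.act S.aut).liftQ S.extendScalarsActPre
    (S.relSubR_le_ker_extendScalarsActPre hB)

theorem extendScalarsAct_mkTensor_tmul (hB : Set.MapsTo Ac.aut Bset Bset) (m : M) (a a' : A) :
    S.extendScalarsAct hB (S.mkTensor (m ⊗ₜ a)) a' =
      S.mkTensor (S.aut m ⊗ₜ Ac.mul a (Ac.aut.symm a')) := rfl

theorem extendScalarsAct_comp_quotCoactPreR (hB : Set.MapsTo Ac.aut Bset Bset) {ψ : H →ₗ[k] A}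
    (hψ : ψ ∘ₗ Hb.aut.toLinearMap = Ac.aut.toLinearMap ∘ₗ ψ) :
    TensorProduct.lift (S.extendScalarsAct hB) ∘ₗ TensorProduct.map S.mkTensor ψ ∘ₗ
        quotCoactPreR Ac S.aut =
      S.mkTensor ∘ₗ (Ac.trace ψ).lTensor M := by
  have ψ_aut (h : H) : ψ (Hb.aut h) = Ac.aut (ψ h) := LinearMap.congr_fun hψ h
  have on_coact (m : M) (z : A ⊗[k] H) :
      TensorProduct.lift (S.extendScalarsAct hB) (TensorProduct.map S.mkTensor ψ
        ((TensorProduct.assoc k M A H).symm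
          (S.aut.symm m ⊗ₜ TensorProduct.map LinearMap.id Hb.aut.toLinearMap z))) =
        S.mkTensor (m ⊗ₜ TensorProduct.lift Ac.mul (TensorProduct.map LinearMap.id ψ z)) := by
    induction z with
    | zero => simp
    | add z₁ z₂ h₁ h₂ => simp only [map_add, TensorProduct.tmul_add, h₁, h₂]
    | tmul a h => simp [-Submodule.mkQ_apply, extendScalarsAct_mkTensor_tmul, ψ_aut]
  exact TensorProduct.ext' fun m a ↦ on_coact m (Ac.coact a)

theorem extendScalarsAct_mkTensor_map_aut_symm_one (hB : Set.MapsTo Ac.aut Bset Bset)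
    (z : M ⊗[k] A) :
    S.extendScalarsAct hB
        (S.mkTensor (TensorProduct.map S.aut.symm.toLinearMap Ac.aut.symm.toLinearMap z)) Ac.one =
      S.mkTensor z := by
  induction z with
  | zero => simp
  | add z₁ z₂ h₁ h₂ => simp only [map_add, LinearMap.add_apply, h₁, h₂]
  | tmul m a =>
    simp [-Submodule.mkQ_apply, extendScalarsAct_mkTensor_tmul, Ac.aut_symm_one, Ac.mulOne]

-- A coinvariant `x` has `ρ(x) = θ(x) ⊗ 1`, so letting the second leg of `ρ(x)` act through `ψ`
-- gives `θ(x) · ψ(1) = x`; on a representative of `x` the same operation is `1 ⊗ t`.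
theorem mkTensor_lTensor_trace_of_coinvariant (hB : Set.MapsTo Ac.aut Bset Bset) {ψ : H →ₗ[k] A}
    (ψ_comp_aut : ψ ∘ₗ Hb.aut.toLinearMap = Ac.aut.toLinearMap ∘ₗ ψ) (ψ_one : ψ Hb.one = Ac.one)
    {ρbar : S.ExtendScalars →ₗ[k] S.ExtendScalars ⊗[k] H}
    (hρbar : ρbar ∘ₗ S.mkTensor =
      TensorProduct.map S.mkTensor LinearMap.id ∘ₗ quotCoactPreR Ac S.aut)
    {θ : S.ExtendScalars →ₗ[k] S.ExtendScalars}
    (hθ : θ ∘ₗ S.mkTensor =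
      S.mkTensor ∘ₗ TensorProduct.map S.aut.symm.toLinearMap Ac.aut.symm.toLinearMap)
    {z : M ⊗[k] A} (hz : ρbar (S.mkTensor z) = θ (S.mkTensor z) ⊗ₜ Hb.one) :
    S.mkTensor ((Ac.trace ψ).lTensor M z) = S.mkTensor z := by
  let actψ : S.ExtendScalars ⊗[k] H →ₗ[k] S.ExtendScalars :=
    TensorProduct.lift (S.extendScalarsAct hB) ∘ₗ TensorProduct.map LinearMap.id ψ
  have actψ_ρbar : actψ ∘ₗ ρbar ∘ₗ S.mkTensor = S.mkTensor ∘ₗ (Ac.trace ψ).lTensor M := by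
    rw [hρbar, ← S.extendScalarsAct_comp_quotCoactPreR hB ψ_comp_aut, LinearMap.comp_assoc,
      ← LinearMap.comp_assoc (quotCoactPreR Ac S.aut), ← TensorProduct.map_comp]
    rfl
  calc
    _ = actψ (ρbar (S.mkTensor z)) := (LinearMap.congr_fun actψ_ρbar z).symm
    _ = actψ (θ (S.mkTensor z) ⊗ₜ Hb.one) := by rw [hz]
    _ = S.extendScalarsAct hB (θ (S.mkTensor z)) Ac.one := by
      rw [← ψ_one]
      rfl
    _ = S.mkTensor z := by
      rw [← LinearMap.comp_apply θ, hθ]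
      exact S.extendScalarsAct_mkTensor_map_aut_symm_one hB z

theorem mkTensor_aut_symm_act_tmul_one (hB : Set.MapsTo Ac.aut.symm Bset Bset) (m : M) {b : A}
    (hb : b ∈ Bset) : S.mkTensor (S.aut.symm (S.act m b) ⊗ₜ Ac.one) = S.mkTensor (m ⊗ₜ b) := by
  have h := S.mkTensor_act_tmul (S.aut.symm m) (hB hb) Ac.one
  have aut_symm_act : S.act (S.aut.symm m) (Ac.aut.symm b) = S.aut.symm (S.act m b) :=
    S.aut.injective (by simp [S.aut_act _ _ (hB hb)])
  simpa [aut_symm_act, Ac.aut_one, Ac.mulOne] using h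

theorem mkTensor_aut_symm_lift_act_tmul_one (hB : Set.MapsTo Ac.aut.symm Bset Bset)
    {t : A →ₗ[k] A} (ht : ∀ a, t a ∈ Bset) (z : M ⊗[k] A) :
    S.mkTensor
        (S.aut.symm (TensorProduct.lift S.act (TensorProduct.map LinearMap.id t z)) ⊗ₜ Ac.one) =
      S.mkTensor (t.lTensor M z) := by
  induction z with
  | zero => simp
  | add z₁ z₂ h₁ h₂ => simp only [map_add, TensorProduct.add_tmul, h₁, h₂]
  | tmul m a => simpa using S.mkTensor_aut_symm_act_tmul_one hB m (ht a)

theorem map_mkTensor_quotCoactPreR_tmul_one (m : M) :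
    TensorProduct.map S.mkTensor LinearMap.id (quotCoactPreR Ac S.aut (m ⊗ₜ Ac.one)) =
      S.mkTensor (TensorProduct.map S.aut.symm.toLinearMap Ac.aut.symm.toLinearMap
        (m ⊗ₜ Ac.one)) ⊗ₜ Hb.one := by
  simp [quotCoactPreR, Ac.coact_one, Ac.aut_symm_one, Hb.aut_one]

end HomModuleOn

end ExtendScalars

end

/-! STATEMENT 12: If there is a total integral `φ`, then for every right
`B`-Hom-module `M` the adjunction unit `η_M : M → (M ⊗_B A)^{co H}` is bijective,
with inverse `φ_M(m ⊗ a) = m · t(a)`, `t(a) = a₍₀₎ φ(S(a₍₁₎)) ∈ B`. -/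
theorem statement12
    (k : Type) [Field k] (H : Type) [AddCommGroup H] [Module k H]
    (Hh : MonoidalHomHopf k H)
    (A : Type) [AddCommGroup A] [Module k A]
    (Ac : HomComoduleAlgebra Hh.toMonoidalHomBialgebra A)
    (φ : H →ₗ[k] A) (hφ : IsTotalIntegral Ac φ)
    (t : A →ₗ[k] A)
    (ht : t =
      (TensorProduct.lift Ac.mul) ∘ₗ
        (TensorProduct.map LinearMap.id (φ ∘ₗ Hh.antipode)) ∘ₗ Ac.coact)
    (M : Type) [AddCommGroup M] [Module k M]
    (S : HomModuleOn Ac (coinvA Ac) M) :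
    -- t takes values in B
    (∀ a : A, t a ∈ coinvA Ac) ∧
    -- η_M is bijective with inverse φ_M(m⊗a) = m·t(a)
    (∀ (ρbar : ((M ⊗[k] A) ⧸ relSubR Ac.mul Ac.aut (coinvA Ac) S.act S.aut) →ₗ[k]
          ((M ⊗[k] A) ⧸ relSubR Ac.mul Ac.aut (coinvA Ac) S.act S.aut) ⊗[k] H)
      (θ : ((M ⊗[k] A) ⧸ relSubR Ac.mul Ac.aut (coinvA Ac) S.act S.aut) →ₗ[k]
          ((M ⊗[k] A) ⧸ relSubR Ac.mul Ac.aut (coinvA Ac) S.act S.aut))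
      (φbar : ((M ⊗[k] A) ⧸ relSubR Ac.mul Ac.aut (coinvA Ac) S.act S.aut) →ₗ[k] M),
      ρbar ∘ₗ (relSubR Ac.mul Ac.aut (coinvA Ac) S.act S.aut).mkQ =
        (TensorProduct.map (relSubR Ac.mul Ac.aut (coinvA Ac) S.act S.aut).mkQ
          LinearMap.id) ∘ₗ quotCoactPreR Ac S.aut →
      θ ∘ₗ (relSubR Ac.mul Ac.aut (coinvA Ac) S.act S.aut).mkQ =
        (relSubR Ac.mul Ac.aut (coinvA Ac) S.act S.aut).mkQ ∘ₗ
          TensorProduct.map S.aut.symm.toLinearMap Ac.aut.symm.toLinearMap →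
      -- φbar is induced by φ_M-pre : m ⊗ a ↦ m · t(a)
      φbar ∘ₗ (relSubR Ac.mul Ac.aut (coinvA Ac) S.act S.aut).mkQ =
        (TensorProduct.lift S.act) ∘ₗ (TensorProduct.map LinearMap.id t) →
      -- the unit lands in the coinvariants
      ((∀ m : M,
          ρbar ((relSubR Ac.mul Ac.aut (coinvA Ac) S.act S.aut).mkQ
              (S.aut.symm m ⊗ₜ[k] Ac.one)) =
            θ ((relSubR Ac.mul Ac.aut (coinvA Ac) S.act S.aut).mkQ
              (S.aut.symm m ⊗ₜ[k] Ac.one)) ⊗ₜ[k] Hh.one) ∧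
        -- φ_M ∘ η_M = id
        (∀ m : M,
          φbar ((relSubR Ac.mul Ac.aut (coinvA Ac) S.act S.aut).mkQ
            (S.aut.symm m ⊗ₜ[k] Ac.one)) = m) ∧
        -- η_M ∘ φ_M = id on the coinvariants
        (∀ x, ρbar x = θ x ⊗ₜ[k] Hh.one →
          (relSubR Ac.mul Ac.aut (coinvA Ac) S.act S.aut).mkQ
            (S.aut.symm (φbar x) ⊗ₜ[k] Ac.one) = x))) := by
  subst ht
  refine ⟨Ac.trace_mem_coinvA hφ, fun ρbar θ φbar hρbar hθ hφbar ↦ ⟨fun m ↦ ?_, fun m ↦ ?_, ?_⟩⟩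
  · calc
      _ = TensorProduct.map S.mkTensor LinearMap.id
          (quotCoactPreR Ac S.aut (S.aut.symm m ⊗ₜ Ac.one)) := LinearMap.congr_fun hρbar _
      _ = _ := S.map_mkTensor_quotCoactPreR_tmul_one _
      _ = _ := congrArg (· ⊗ₜ Hh.one) (LinearMap.congr_fun hθ (S.aut.symm m ⊗ₜ Ac.one)).symm
  · calc
      _ = S.act (S.aut.symm m) (Ac.trace (φ ∘ₗ Hh.antipode) Ac.one) := LinearMap.congr_fun hφbar _
      _ = S.aut (S.aut.symm m) := by rw [Ac.trace_one hφ.comp_antipode_one, S.act_one]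
      _ = m := S.aut.apply_symm_apply m
  · intro x hx
    obtain ⟨z, rfl⟩ := Submodule.mkQ_surjective _ x
    calc
      _ = _ := congrArg (fun n ↦ S.mkTensor (S.aut.symm n ⊗ₜ Ac.one)) (LinearMap.congr_fun hφbar z)
      _ = S.mkTensor ((Ac.trace (φ ∘ₗ Hh.antipode)).lTensor M z) :=
        S.mkTensor_aut_symm_lift_act_tmul_one Ac.mapsTo_aut_symm_coinvA (Ac.trace_mem_coinvA hφ) z
      _ = S.mkTensor z := S.mkTensor_lTensor_trace_of_coinvariant Ac.mapsTo_aut_coinvA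
        hφ.comp_antipode_comp_aut hφ.comp_antipode_one hρbar hθ hx
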